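/- Let 0 < λ ≤ 1 and let n ≥ 2 be an integer. Let f be analytic on the unit disk 𝔻 with f ∈ 𝓛^{2,λ}, let F(z) = ∫₀ᶻ f(w) dw be its primitive, and assume F ∈ H² with a.e. radial boundary values F*. Then there exists a function F̃ of class C¹ on {z ∈ ℂ : |z| > 1} such that: (a) for a.e. θ ∈ [0,2π], F̃(re^{iθ}) → F*(θ) as r → 1⁺; (b) F̃(z) = O(z^n) as z → ∞; (c) ∂̄F̃(z) = O(z^{n−2}) as z → ∞; and (d) sup_{a∈𝔻} (1 − |a|²)^{1−λ} ∫_{|z|>1} (|∂̄F̃(z)|²/(|z|^n − 1)²) · (1 − 1/|σ_a(z)|²) dA(z) < ∞. -/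

import Mathlib

open MeasureTheory Metric Complex Filter Set
open scoped ENNReal Real Topology

noncomputable section

/-- The Cauchy–Riemann (Wirtinger) operator `∂̄g = (1/2)(∂g/∂x + i ∂g/∂y)`. -/
def dbar (g : ℂ → ℂ) (z : ℂ) : ℂ :=
  (1 / 2 : ℂ) * (fderiv ℝ g z 1 + Complex.I * fderiv ℝ g z Complex.I)

/-- Membership in the Hardy space `H²`. -/
def MemH2 (F : ℂ → ℂ) : Prop :=
  ∃ M : ℝ, ∀ r ∈ Set.Ioo (0 : ℝ) 1,
    (∫ θ in (0 : ℝ)..(2 * Real.pi),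
      ‖F ((r : ℂ) * Complex.exp ((θ : ℂ) * Complex.I))‖ ^ 2) ≤ M

/-- `Fb` is the a.e. radial boundary value function of `F` (from inside). -/
def RadialLimitIn (F : ℂ → ℂ) (Fb : ℝ → ℂ) : Prop :=
  ∀ᵐ (θ : ℝ) ∂(volume.restrict (Set.Ioc (0 : ℝ) (2 * Real.pi))),
    Tendsto (fun r : ℝ => F ((r : ℂ) * Complex.exp ((θ : ℂ) * Complex.I)))
      (𝓝[<] 1) (𝓝 (Fb θ))

/-- `Fb` is the a.e. radial limit function of `G` from outside the circle. -/
def RadialLimitOut (G : ℂ → ℂ) (Fb : ℝ → ℂ) : Prop :=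
  ∀ᵐ (θ : ℝ) ∂(volume.restrict (Set.Ioc (0 : ℝ) (2 * Real.pi))),
    Tendsto (fun r : ℝ => G ((r : ℂ) * Complex.exp ((θ : ℂ) * Complex.I)))
      (𝓝[>] 1) (𝓝 (Fb θ))

/-- `g(z) = O(z^m)` as `z → ∞`. -/
def BigOPow (g : ℂ → ℂ) (m : ℕ) : Prop :=
  ∃ C R : ℝ, 0 < C ∧ 0 < R ∧ ∀ z : ℂ, R ≤ ‖z‖ → ‖g z‖ ≤ C * ‖z‖ ^ m

/-- The Möbius transformation `σ_a(z) = (a - z)/(1 - conj a · z)`. -/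
def mobius (a z : ℂ) : ℂ := (a - z) / (1 - (starRingEnd ℂ) a * z)

/-- Membership in the analytic Morrey space `𝓛^{2,λ}`, via the integral
characterization. -/
def MemMorrey (lam : ℝ) (f : ℂ → ℂ) : Prop :=
  (⨆ a ∈ ball (0 : ℂ) 1, ENNReal.ofReal ((1 - ‖a‖ ^ 2) ^ (1 - lam)) *
    ∫⁻ z in ball (0 : ℂ) 1,
      ENNReal.ofReal (‖deriv f z‖ ^ 2 * (1 - ‖mobius a z‖ ^ 2))) < ⊤

lemma circle_mean_le (g : ℂ → ℂ) (z : ℂ) (ρ R : ℝ) (h0 : 0 < ρ) (hR : ρ < R)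
    (hg : DifferentiableOn ℂ g (ball z R)) :
    ‖g z‖ₑ * ENNReal.ofReal (2 * π) ≤
      ∫⁻ θ in Set.Ioo (-π) π, ‖g (circleMap z ρ θ)‖ₑ := by
  have hsub : closedBall z ρ ⊆ ball z R := closedBall_subset_ball hR
  have h1 : DiffContOnCl ℂ g (ball z |ρ|) := by
    rw [abs_of_pos h0]
    refine DifferentiableOn.diffContOnCl ?_
    rw [closure_ball _ h0.ne']
    exact hg.mono hsub
  have h2 := h1.circleAverage
  rw [Real.circleAverage_def] at h2
  have hper : Function.Periodic (fun θ => g (circleMap z ρ θ)) (2 * π) := fun θ => by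
    simp only [periodic_circleMap z ρ θ]
  have h3 : ∫ θ in (0:ℝ)..2 * π, g (circleMap z ρ θ) =
      ∫ θ in (-π)..π, g (circleMap z ρ θ) := by
    have := hper.intervalIntegral_add_eq 0 (-π)
    rw [zero_add] at this
    rw [this]; congr 1; ring
  rw [h3, intervalIntegral.integral_of_le (by linarith [Real.pi_pos]),
    integral_Ioc_eq_integral_Ioo] at h2
  have h4 : ENNReal.ofReal (2 * π) * ‖g z‖ₑ = ‖∫ θ in Set.Ioo (-π) π, g (circleMap z ρ θ)‖ₑ := by
    rw [← h2, enorm_smul, ← mul_assoc]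
    have : ENNReal.ofReal (2 * π) * ‖(2 * π)⁻¹‖ₑ = 1 := by
      rw [Real.enorm_eq_ofReal (by positivity), ← ENNReal.ofReal_mul (by positivity),
        mul_inv_cancel₀ (by positivity), ENNReal.ofReal_one]
    rw [this, one_mul]
  rw [mul_comm, h4]
  exact enorm_integral_le_lintegral_enorm _

lemma disk_mean_le (g : ℂ → ℂ) (hm : Measurable g) (z : ℂ) (R : ℝ)
    (hg : DifferentiableOn ℂ g (ball z R)) :
    ‖g z‖ₑ * volume (ball (0 : ℂ) R) ≤ ∫⁻ u in ball z R, ‖g u‖ₑ := by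
  have e1 : ∫⁻ u in ball z R, ‖g u‖ₑ = ∫⁻ u, (ball (0 : ℂ) R).indicator (fun u => ‖g (z + u)‖ₑ) u := by
    rw [← lintegral_indicator measurableSet_ball,
      ← lintegral_add_left_eq_self (μ := (volume : Measure ℂ)) _ z]
    refine lintegral_congr fun u => ?_
    by_cases hu : ‖u‖ < R <;> simp [Set.indicator, hu]
  have e2 : ‖g z‖ₑ * volume (ball (0 : ℂ) R) =
      ∫⁻ u, (ball (0 : ℂ) R).indicator (fun u => ‖g z‖ₑ) u := by
    rw [lintegral_indicator measurableSet_ball, setLIntegral_const]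
  have m1 : Measurable ((ball (0 : ℂ) R).indicator (fun u => ‖g (z + u)‖ₑ)) :=
    (by fun_prop : Measurable fun u => ‖g (z + u)‖ₑ).indicator measurableSet_ball
  have m2 : Measurable ((ball (0 : ℂ) R).indicator (fun _ => ‖g z‖ₑ)) :=
    measurable_const.indicator measurableSet_ball
  have mp : Measurable (fun p : ℝ × ℝ => Complex.polarCoord.symm p) := by
    simp only [Complex.polarCoord_symm_apply]; fun_prop
  rw [e1, e2, ← Complex.lintegral_comp_polarCoord_symm, ← Complex.lintegral_comp_polarCoord_symm]
  simp only [polarCoord_target, Measure.volume_eq_prod, smul_eq_mul]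
  rw [setLIntegral_prod _ (by
      exact ((ENNReal.measurable_ofReal.comp measurable_fst).mul (m2.comp mp)).aemeasurable),
    setLIntegral_prod _ (by
      exact ((ENNReal.measurable_ofReal.comp measurable_fst).mul (m1.comp mp)).aemeasurable)]
  refine setLIntegral_mono' measurableSet_Ioi fun ρ (hρ : 0 < ρ) => ?_
  rw [lintegral_const_mul' _ _ ENNReal.ofReal_ne_top, lintegral_const_mul' _ _ ENNReal.ofReal_ne_top]
  refine mul_le_mul' le_rfl ?_
  have key : ∀ θ : ℝ, Complex.polarCoord.symm (ρ, θ) = circleMap 0 ρ θ := fun θ => by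
    simp [Complex.polarCoord_symm_apply, circleMap, Complex.exp_mul_I]
  simp only [key]
  by_cases h : ρ < R
  · have hb : ∀ θ, circleMap 0 ρ θ ∈ ball (0:ℂ) R := fun θ => by
      simp [abs_of_pos hρ, h]
    simp only [Set.indicator_of_mem (hb _)]
    rw [setLIntegral_const]
    have h1 : volume (Set.Ioo (-π) π) = ENNReal.ofReal (2 * π) := by
      rw [Real.volume_Ioo]; congr 1; ring
    have h2 : ∀ θ, z + circleMap 0 ρ θ = circleMap z ρ θ := fun θ => by simp [circleMap]
    simp only [h1, h2]
    exact circle_mean_le g z ρ R hρ h hg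
  · have hb : ∀ θ, circleMap 0 ρ θ ∉ ball (0:ℂ) R := fun θ => by
      simp [abs_of_pos hρ]; linarith
    simp [Set.indicator_of_notMem (hb _)]

/-- growth of the derivative -/
lemma deriv_growth (f : ℂ → ℂ) (hf : DifferentiableOn ℂ f (ball (0 : ℂ) 1))
    (hK : ∫⁻ z in ball (0 : ℂ) 1, ENNReal.ofReal (‖deriv f z‖ ^ 2 * (1 - ‖z‖ ^ 2)) < ⊤) :
    ∃ C : ℝ, 0 ≤ C ∧ ∀ z ∈ ball (0 : ℂ) 1, ‖deriv f z‖ ^ 2 * (1 - ‖z‖) ^ 3 ≤ C ^ 2 := by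
  set K := ∫⁻ z in ball (0 : ℂ) 1, ENNReal.ofReal (‖deriv f z‖ ^ 2 * (1 - ‖z‖ ^ 2)) with hKdef
  refine ⟨√(8 * K.toReal / π), by positivity, fun z hz => ?_⟩
  rw [Real.sq_sqrt (by positivity)]
  have hz1 : ‖z‖ < 1 := by simpa using hz
  set R := (1 - ‖z‖) / 2 with hR
  have hRpos : 0 < R := by rw [hR]; linarith
  have hn : ∀ u ∈ ball z R, ‖u‖ < 1 - R := fun u hu => by
    have h1 : ‖u - z‖ < R := by simpa [dist_eq_norm] using hu
    have : ‖u‖ ≤ ‖u - z‖ + ‖z‖ := by simpa using norm_add_le (u - z) z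
    rw [hR] at *; linarith
  have hsub : ball z R ⊆ ball (0:ℂ) 1 := fun u hu => by
    have := hn u hu
    simp; linarith
  have hd : DifferentiableOn ℂ (deriv f) (ball (0:ℂ) 1) := hf.deriv isOpen_ball
  have h1 := disk_mean_le (fun u => deriv f u ^ 2) ((measurable_deriv f).pow_const 2) z R
    ((hd.pow 2).mono hsub)
  have h2 : ENNReal.ofReal R * ∫⁻ u in ball z R, ‖deriv f u ^ 2‖ₑ ≤ K := by
    rw [← lintegral_const_mul' _ _ ENNReal.ofReal_ne_top]
    refine le_trans ?_ (lintegral_mono_set hsub)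
    refine setLIntegral_mono' measurableSet_ball fun u hu => ?_
    rw [← ofReal_norm, ← ENNReal.ofReal_mul hRpos.le, norm_pow, mul_comm]
    refine ENNReal.ofReal_le_ofReal ?_
    have := hn u hu
    gcongr
    nlinarith [norm_nonneg u]
  have h3 : ENNReal.ofReal R * (‖deriv f z ^ 2‖ₑ * volume (ball (0 : ℂ) R)) ≤ K :=
    le_trans (by gcongr) h2
  have h4 := ENNReal.toReal_mono hK.ne h3
  rw [Complex.volume_ball] at h4
  simp [ENNReal.toReal_ofReal hRpos.le] at h4
  rw [le_div_iff₀ Real.pi_pos]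
  have : 1 - ‖z‖ = 2 * R := by rw [hR]; ring
  rw [this]
  linarith

lemma growth (f : ℂ → ℂ) (hf : DifferentiableOn ℂ f (ball (0 : ℂ) 1))
    (C : ℝ) (hC : 0 ≤ C)
    (h : ∀ z ∈ ball (0 : ℂ) 1, ‖deriv f z‖ ^ 2 * (1 - ‖z‖) ^ 3 ≤ C ^ 2) :
    ∀ ζ : ℂ, ‖ζ‖ = 1 → ∀ r : ℝ, 0 ≤ r → r < 1 →
      ‖f (r * ζ)‖ ≤ ‖f 0‖ + 2 * C * (√(1 - r))⁻¹ := by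
  intro ζ hζ r hr0 hr1
  have hmem : ∀ s ∈ Icc 0 r, (s * ζ : ℂ) ∈ ball (0:ℂ) 1 := fun s hs => by
    simp [hζ, abs_of_nonneg hs.1]; linarith [hs.2]
  have hder : ∀ s ∈ Icc 0 r, HasDerivAt (fun s : ℝ => f (s * ζ)) (deriv f (s * ζ) * ζ) s := by
    intro s hs
    have h1 : HasDerivAt f (deriv f (s * ζ)) (s * ζ) :=
      (hf.differentiableAt (isOpen_ball.mem_nhds (hmem s hs))).hasDerivAt
    have h2 : HasDerivAt (fun s : ℂ => s * ζ) ζ (s : ℂ) := by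
      simpa using (hasDerivAt_id (s:ℂ)).mul_const ζ
    exact (HasDerivAt.comp (s : ℂ) h1 h2).comp_ofReal
  have hB : ∀ s ∈ Icc 0 r, HasDerivAt (fun s : ℝ => ‖f 0‖ + 2 * C * (√(1 - s))⁻¹)
      (C * (√(1 - s))⁻¹ ^ 3) s := by
    intro s hs
    have hp : 0 < 1 - s := by linarith [hs.2]
    have hq : 0 < √(1 - s) := Real.sqrt_pos.2 hp
    have := ((((hasDerivAt_id s).const_sub 1).sqrt hp.ne').inv hq.ne').const_mul (2 * C)
      |>.const_add ‖f 0‖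
    refine HasDerivAt.congr_deriv (f := fun s : ℝ => ‖f 0‖ + 2 * C * (√(1 - s))⁻¹) this ?_
    simp only [id_eq]
    field_simp
  refine image_norm_le_of_norm_deriv_right_le_deriv_boundary' (a := 0) (b := r)
    (f := fun s : ℝ => f (s * ζ)) (f' := fun s => deriv f (s * ζ) * ζ)
    (B := fun s : ℝ => ‖f 0‖ + 2 * C * (√(1 - s))⁻¹)
    (B' := fun s => C * (√(1 - s))⁻¹ ^ 3)
    (fun s hs => (hder s hs).continuousAt.continuousWithinAt)
    (fun s hs => (hder s (Ico_subset_Icc_self hs)).hasDerivWithinAt)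
    (by simp [hC])
    (fun s hs => (hB s hs).continuousAt.continuousWithinAt)
    (fun s hs => (hB s (Ico_subset_Icc_self hs)).hasDerivWithinAt)
    ?_ ⟨hr0, le_rfl⟩
  intro s hs
  have hp : 0 < 1 - s := by linarith [hs.2]
  have hq : 0 < √(1 - s) := Real.sqrt_pos.2 hp
  have h1 := h _ (hmem s (Ico_subset_Icc_self hs))
  have hn : ‖(s * ζ : ℂ)‖ = s := by simp [hζ, abs_of_nonneg hs.1]
  rw [hn] at h1
  rw [norm_mul, hζ, mul_one, inv_pow, ← div_eq_mul_inv, le_div_iff₀ (by positivity)]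
  refine abs_le_of_sq_le_sq' ?_ hC |>.2
  calc _ = ‖deriv f (s * ζ)‖ ^ 2 * (√(1 - s) ^ 2) ^ 3 := by ring
    _ ≤ C ^ 2 := by rw [Real.sq_sqrt hp.le]; exact h1

def crefl (z : ℂ) : ℂ := ((starRingEnd ℂ) z)⁻¹

lemma norm_refl (z : ℂ) : ‖crefl z‖ = ‖z‖⁻¹ := by simp [crefl]

def reflD (z : ℂ) : ℂ →L[ℝ] ℂ :=
  (-((starRingEnd ℂ) z ^ 2)⁻¹) • (Complex.conjCLE : ℂ →L[ℝ] ℂ)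

lemma reflD_apply (z v : ℂ) : reflD z v = -((starRingEnd ℂ) z ^ 2)⁻¹ * (starRingEnd ℂ) v := by
  simp [reflD]

lemma hasFDerivAt_refl (z : ℂ) (hz : z ≠ 0) : HasFDerivAt crefl (reflD z) z := by
  have h1 : HasFDerivAt (fun z : ℂ => (starRingEnd ℂ) z) (Complex.conjCLE : ℂ →L[ℝ] ℂ) z :=
    (Complex.conjCLE : ℂ →L[ℝ] ℂ).hasFDerivAt
  have h2 : HasDerivAt (fun w : ℂ => w⁻¹) (-((starRingEnd ℂ) z ^ 2)⁻¹) ((starRingEnd ℂ) z) :=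
    hasDerivAt_inv (by simpa using hz)
  exact h2.comp_hasFDerivAt z h1

lemma abs_det_reflD (z : ℂ) : |(reflD z).det| = (‖z‖ ^ 4)⁻¹ := by
  set c := -((starRingEnd ℂ) z ^ 2)⁻¹ with hc
  have h : ((reflD z : ℂ →L[ℝ] ℂ) : ℂ →ₗ[ℝ] ℂ) =
      LinearMap.mulLeft ℝ c ∘ₗ (Complex.conjAe.toLinearMap) := by
    ext v <;> simp [reflD, hc]
  have hd : LinearMap.det (LinearMap.mulLeft ℝ c) = ‖c‖ ^ 2 := by
    have : LinearMap.det (LinearMap.mulLeft ℝ c) = Algebra.norm ℝ c := by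
      rw [Algebra.norm_apply]; rfl
    rw [this, Algebra.norm_complex_apply, Complex.normSq_eq_norm_sq]
  rw [ContinuousLinearMap.det, h, LinearMap.det_comp, hd]
  have : LinearMap.det Complex.conjAe.toLinearMap = -1 := Complex.det_conjAe
  rw [this, hc]
  simp
  ring

lemma mobius_refl (a z : ℂ) (hz : z ≠ 0) : ‖mobius a (crefl z)‖ ^ 2 = 1 / ‖mobius a z‖ ^ 2 := by
  have hc : (starRingEnd ℂ) z ≠ 0 := by simpa using hz
  have h1 : mobius a (crefl z) = (starRingEnd ℂ) ((mobius a z)⁻¹) := by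
    simp only [mobius, crefl, inv_div, map_div₀, map_sub, map_mul, map_one, Complex.conj_conj]
    rw [← mul_div_mul_right _ _ hc, sub_mul, sub_mul, mul_assoc, inv_mul_cancel₀ hc,
      ← neg_div_neg_eq]
    ring_nf
  rw [h1, RCLike.norm_conj, norm_inv]; simp

def pext (f F : ℂ → ℂ) (z : ℂ) : ℂ := F (crefl z) + (z - crefl z) * f (crefl z)

lemma refl_mem {z : ℂ} (hz : 1 < ‖z‖) : crefl z ∈ ball (0:ℂ) 1 := by
  rw [mem_ball_zero_iff, norm_refl]; exact inv_lt_one_of_one_lt₀ hz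

lemma dbar_ext (f F : ℂ → ℂ) (hf : DifferentiableOn ℂ f (ball (0 : ℂ) 1))
    (hFprim : ∀ z ∈ ball (0 : ℂ) 1, HasDerivAt F (f z) z) (z : ℂ) (hz : 1 < ‖z‖) :
    dbar (pext f F) z = -(z - crefl z) * deriv f (crefl z) / (starRingEnd ℂ) z ^ 2 := by
  have hz0 : z ≠ 0 := by rintro rfl; simp at hz; linarith
  have hr := hasFDerivAt_refl z hz0
  have h1 := (hFprim _ (refl_mem hz)).comp_hasFDerivAt z hr
  have h2 := (hf.differentiableAt (isOpen_ball.mem_nhds (refl_mem hz))).hasDerivAt.comp_hasFDerivAt z hr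
  have h3 := h1.add (((hasFDerivAt_id (𝕜 := ℝ) z).sub hr).mul h2)
  have h4 : HasFDerivAt (pext f F) _ z := h3
  rw [dbar, h4.fderiv]
  simp [reflD_apply]
  ring_nf
  simp
  ring

lemma contDiff_ext (f F : ℂ → ℂ) (hf : DifferentiableOn ℂ f (ball (0 : ℂ) 1))
    (hFprim : ∀ z ∈ ball (0 : ℂ) 1, HasDerivAt F (f z) z) :
    ContDiffOn ℝ 1 (pext f F) {z : ℂ | 1 < ‖z‖} := by
  have hr : ContDiffOn ℝ 1 crefl {z : ℂ | 1 < ‖z‖} := by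
    intro z hz
    have hz0 : z ≠ 0 := by rintro rfl; simp at hz; linarith
    have h : ContDiff ℝ 1 (fun z : ℂ => (starRingEnd ℂ) z) :=
      (Complex.conjCLE : ℂ →L[ℝ] ℂ).contDiff
    exact (h.contDiffAt.inv (by simpa using hz0)).contDiffWithinAt
  have hm : MapsTo crefl {z : ℂ | 1 < ‖z‖} (ball 0 1) := fun z hz => refl_mem hz
  have hF : DifferentiableOn ℂ F (ball 0 1) := fun z hz => (hFprim z hz).differentiableAt.differentiableWithinAt
  have c1 : ContDiffOn ℝ 1 F (ball 0 1) := (hF.contDiffOn isOpen_ball).restrict_scalars ℝ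
  have c2 : ContDiffOn ℝ 1 f (ball 0 1) := (hf.contDiffOn isOpen_ball).restrict_scalars ℝ
  exact (c1.comp hr hm).add ((contDiffOn_id.sub hr).mul (c2.comp hr hm))

lemma norm_sub_refl (z : ℂ) (hz : 1 < ‖z‖) : ‖z - crefl z‖ = ‖z‖ - ‖z‖⁻¹ := by
  have hz0 : z ≠ 0 := by rintro rfl; simp at hz; linarith
  have hc : (starRingEnd ℂ) z ≠ 0 := by simpa using hz0
  have : z - crefl z = ((‖z‖ ^ 2 - 1 : ℝ) : ℂ) / (starRingEnd ℂ) z := by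
    rw [crefl, eq_div_iff hc, sub_mul, inv_mul_cancel₀ hc, Complex.mul_conj, Complex.normSq_eq_norm_sq]
    simp
  rw [this, norm_div, RCLike.norm_conj, Complex.norm_real, Real.norm_of_nonneg (by nlinarith)]
  have : ‖z‖ ≠ 0 := by positivity
  field_simp

lemma integral_bound (f F : ℂ → ℂ) (hf : DifferentiableOn ℂ f (ball (0 : ℂ) 1))
    (hFprim : ∀ z ∈ ball (0 : ℂ) 1, HasDerivAt F (f z) z) (n : ℕ) (hn : 2 ≤ n) (a : ℂ) (ha : ‖a‖ < 1) :
    ∫⁻ z in {z : ℂ | 1 < ‖z‖},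
          ENNReal.ofReal (‖dbar (pext f F) z‖ ^ 2 / (‖z‖ ^ n - 1) ^ 2 *
            (1 - 1 / ‖mobius a z‖ ^ 2)) ≤
    ∫⁻ z in ball (0 : ℂ) 1,
      ENNReal.ofReal (‖deriv f z‖ ^ 2 * (1 - ‖mobius a z‖ ^ 2)) := by
  have hms : MeasurableSet {z : ℂ | 1 < ‖z‖} := measurableSet_lt measurable_const measurable_norm
  have hne : ∀ z ∈ {z : ℂ | 1 < ‖z‖}, z ≠ 0 := by
    rintro z hz rfl; simp at hz; linarith
  have him : crefl '' {z : ℂ | 1 < ‖z‖} ⊆ ball 0 1 := by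
    rintro _ ⟨z, hz, rfl⟩; exact refl_mem hz
  have hinj : InjOn crefl {z : ℂ | 1 < ‖z‖} := by
    intro x _ y _ h
    exact (starRingEnd ℂ).injective (inv_injective h)
  refine le_trans ?_ (lintegral_mono_set him)
  rw [lintegral_image_eq_lintegral_abs_det_fderiv_mul volume hms
    (fun z hz => (hasFDerivAt_refl z (hne z hz)).hasFDerivWithinAt) hinj]
  refine setLIntegral_mono' hms fun z hz => ?_
  have hz' : 1 < ‖z‖ := hz
  rw [abs_det_reflD, ← ENNReal.ofReal_mul (by positivity), mobius_refl a z (hne z hz), ← mul_assoc]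
  by_cases hneg : 1 - 1 / ‖mobius a z‖ ^ 2 ≤ 0
  · rw [ENNReal.ofReal_of_nonpos]
    · exact zero_le
    · exact mul_nonpos_of_nonneg_of_nonpos (by positivity) hneg
  push Not at hneg
  refine ENNReal.ofReal_le_ofReal ?_
  refine mul_le_mul_of_nonneg_right ?_ hneg.le
  rw [dbar_ext f F hf hFprim z hz', norm_div, norm_mul, norm_neg, norm_sub_refl z hz', norm_pow,
    RCLike.norm_conj]
  set t := ‖z‖
  have ht2 : t ^ 2 ≤ t ^ n := pow_le_pow_right₀ hz'.le hn
  have ht : 0 < t ^ n - 1 := by nlinarith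
  have hle : t - t⁻¹ ≤ t ^ n - 1 := by
    have : t⁻¹ > 0 := by positivity
    have h3 : t * t⁻¹ = 1 := mul_inv_cancel₀ (by positivity)
    have : (t-1)^2 ≥ 0 := sq_nonneg _
    nlinarith
  have h0 : 0 ≤ t - t⁻¹ := by
    have := inv_lt_one_of_one_lt₀ hz'
    linarith
  have hd : (t - t⁻¹) ^ 2 / (t ^ n - 1) ^ 2 ≤ 1 := by
    rw [div_le_one (by positivity)]; gcongr
  calc _ = ((t - t⁻¹) ^ 2 / (t ^ n - 1) ^ 2) * ((t ^ 4)⁻¹ * ‖deriv f (crefl z)‖ ^ 2) := by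
        field_simp
    _ ≤ 1 * ((t ^ 4)⁻¹ * ‖deriv f (crefl z)‖ ^ 2) := by gcongr
    _ = _ := one_mul _

lemma bdd_refl (g : ℂ → ℂ) (hg : ContinuousOn g (ball 0 1)) :
    ∃ C : ℝ, 0 ≤ C ∧ ∀ z : ℂ, 2 ≤ ‖z‖ → ‖g (crefl z)‖ ≤ C := by
  have hs : closedBall (0:ℂ) (1/2) ⊆ ball 0 1 := closedBall_subset_ball (by norm_num)
  obtain ⟨C, hC⟩ := (isCompact_closedBall (0:ℂ) (1/2)).exists_bound_of_continuousOn (hg.mono hs)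
  refine ⟨|C|, abs_nonneg _, fun z hz => (hC _ ?_).trans (le_abs_self C)⟩
  rw [mem_closedBall_zero_iff, norm_refl, one_div]
  exact inv_anti₀ (by norm_num) hz

lemma radial_aux (f : ℂ → ℂ) (A B : ℝ) (ζ : ℂ) (hζ : ‖ζ‖ = 1)
    (h : ∀ r : ℝ, 0 ≤ r → r < 1 → ‖f (r * ζ)‖ ≤ A + B * (√(1 - r))⁻¹) :
    Tendsto (fun r : ℝ => (1 - r) * ‖f (r * ζ)‖) (𝓝[<] 1) (𝓝 0) := by
  have hlim : Tendsto (fun r : ℝ => (1 - r) * A + B * √(1 - r)) (𝓝[<] 1) (𝓝 0) := by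
    have : Continuous (fun r : ℝ => (1 - r) * A + B * √(1 - r)) := by fun_prop
    have := this.tendsto 1
    simp at this
    exact this.mono_left nhdsWithin_le_nhds
  refine squeeze_zero' ?_ ?_ hlim
  · filter_upwards [self_mem_nhdsWithin] with r (hr : r < 1)
    exact mul_nonneg (by linarith) (norm_nonneg _)
  · filter_upwards [Ioo_mem_nhdsLT (show (0:ℝ) < 1 by norm_num)] with r hr
    have hp : 0 < 1 - r := by linarith [hr.2]
    have hq : 0 < √(1 - r) := Real.sqrt_pos.2 hp
    calc _ ≤ (1 - r) * (A + B * (√(1 - r))⁻¹) := by gcongr; exact h r hr.1.le hr.2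
      _ = (1 - r) * A + B * (√(1 - r) * √(1 - r) * (√(1 - r))⁻¹) := by
        rw [Real.mul_self_sqrt hp.le]; ring
      _ = _ := by rw [mul_assoc (√(1-r)), mul_inv_cancel₀ hq.ne', mul_one]

/-- Theorem 3.2, (i) ⇒ (ii): a function in the analytic Morrey space `𝓛^{2,λ}`
admits a pseudoanalytic extension of its primitive. -/
theorem morrey_implies_pseudoanalytic_extension
    (lam : ℝ) (hlam0 : 0 < lam) (hlam1 : lam ≤ 1)
    (n : ℕ) (hn : 2 ≤ n)
    (f F : ℂ → ℂ)
    (hf : DifferentiableOn ℂ f (ball (0 : ℂ) 1))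
    (hfM : MemMorrey lam f)
    (hF0 : F 0 = 0)
    (hFprim : ∀ z ∈ ball (0 : ℂ) 1, HasDerivAt F (f z) z)
    (hFH2 : MemH2 F)
    (Fstar : ℝ → ℂ)
    (hFb : RadialLimitIn F Fstar) :
    ∃ Ftil : ℂ → ℂ,
      ContDiffOn ℝ 1 Ftil {z : ℂ | 1 < ‖z‖} ∧
      RadialLimitOut Ftil Fstar ∧
      BigOPow Ftil n ∧
      BigOPow (dbar Ftil) (n - 2) ∧
      (⨆ a ∈ ball (0 : ℂ) 1, ENNReal.ofReal ((1 - ‖a‖ ^ 2) ^ (1 - lam)) *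
        ∫⁻ z in {z : ℂ | 1 < ‖z‖},
          ENNReal.ofReal (‖dbar Ftil z‖ ^ 2 / (‖z‖ ^ n - 1) ^ 2 *
            (1 - 1 / ‖mobius a z‖ ^ 2))) < ⊤ := by
  have hK : ∫⁻ z in ball (0 : ℂ) 1, ENNReal.ofReal (‖deriv f z‖ ^ 2 * (1 - ‖z‖ ^ 2)) < ⊤ := by
    refine lt_of_le_of_lt ?_ hfM
    have := le_iSup₂ (f := fun (a : ℂ) (_ : a ∈ ball (0 : ℂ) 1) =>
      ENNReal.ofReal ((1 - ‖a‖ ^ 2) ^ (1 - lam)) *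
      ∫⁻ z in ball (0 : ℂ) 1, ENNReal.ofReal (‖deriv f z‖ ^ 2 * (1 - ‖mobius a z‖ ^ 2)))
      (0 : ℂ) (by simp)
    simpa [mobius] using this
  obtain ⟨C, hC, hder⟩ := deriv_growth f hf hK
  have hgr := growth f hf C hC hder
  have hFd : DifferentiableOn ℂ F (ball 0 1) :=
    fun z hz => (hFprim z hz).differentiableAt.differentiableWithinAt
  refine ⟨pext f F, contDiff_ext f F hf hFprim, ?_, ?_, ?_, ?_⟩
  · filter_upwards [hFb] with θ hθ
    set ζ := Complex.exp ((θ : ℂ) * Complex.I) with hζd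
    have hζ : ‖ζ‖ = 1 := Complex.norm_exp_ofReal_mul_I θ
    have hinv : Tendsto (fun r : ℝ => r⁻¹) (𝓝[>] 1) (𝓝[<] 1) := by
      refine tendsto_nhdsWithin_iff.2 ⟨?_, ?_⟩
      · have : Tendsto (fun r : ℝ => r⁻¹) (𝓝 1) (𝓝 1⁻¹) := tendsto_inv₀ one_ne_zero
        rw [inv_one] at this
        exact this.mono_left nhdsWithin_le_nhds
      · filter_upwards [self_mem_nhdsWithin] with r (hr : 1 < r)
        exact inv_lt_one_of_one_lt₀ hr
    have hrefl : ∀ r : ℝ, crefl (r * ζ) = ((r⁻¹ : ℝ) : ℂ) * ζ := fun r => by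
      have h1 : ζ * (starRingEnd ℂ) ζ = 1 := by
        rw [Complex.mul_conj, Complex.normSq_eq_norm_sq, hζ]; simp
      have h2 : ((starRingEnd ℂ) ζ)⁻¹ = ζ := (eq_inv_of_mul_eq_one_left h1).symm
      simp only [crefl, map_mul, Complex.conj_ofReal, mul_inv, h2]
      push_cast; rfl
    have h1 : Tendsto (fun r : ℝ => F (crefl (r * ζ))) (𝓝[>] 1) (𝓝 (Fstar θ)) := by
      simp only [hrefl]
      exact hθ.comp hinv
    have h2 : Tendsto (fun r : ℝ => (r * ζ - crefl (r * ζ)) * f (crefl (r * ζ))) (𝓝[>] 1) (𝓝 0) := by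
      rw [tendsto_zero_iff_norm_tendsto_zero]
      have h3 := (radial_aux f _ _ ζ hζ (hgr ζ hζ)).comp hinv
      have h4 : Tendsto (fun r : ℝ => r + 1) (𝓝[>] 1) (𝓝 (1 + 1)) :=
        ((continuous_id.add continuous_const).tendsto (1:ℝ)).mono_left nhdsWithin_le_nhds
      have h5 := h4.mul h3
      rw [mul_zero] at h5
      refine h5.congr' ?_
      filter_upwards [self_mem_nhdsWithin] with r (hr : 1 < r)
      have hn : ‖(r * ζ : ℂ)‖ = r := by simp [hζ]; linarith
      rw [norm_mul, norm_sub_refl _ (by rw [hn]; exact hr), hn, hrefl]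
      simp only [Function.comp]
      have : r ≠ 0 := by linarith
      field_simp
      ring
    have := h1.add h2
    rw [add_zero] at this
    exact this
  · obtain ⟨C1, hC1, h1⟩ := bdd_refl F hFd.continuousOn
    obtain ⟨C2, hC2, h2⟩ := bdd_refl f hf.continuousOn
    refine ⟨C1 + C2 + 1, 2, by positivity, by norm_num, fun z hz => ?_⟩
    have hz1 : 1 < ‖z‖ := by linarith
    have e1 : 1 ≤ ‖z‖ ^ n := one_le_pow₀ hz1.le
    have e2 : ‖z‖ ≤ ‖z‖ ^ n := le_self_pow₀ hz1.le (by omega)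
    have e3 : ‖z - crefl z‖ ≤ ‖z‖ ^ n := by
      rw [norm_sub_refl z hz1]
      have : 0 ≤ ‖z‖⁻¹ := by positivity
      linarith
    calc ‖pext f F z‖ ≤ ‖F (crefl z)‖ + ‖z - crefl z‖ * ‖f (crefl z)‖ := by
          rw [pext, ← norm_mul]; exact norm_add_le _ _
      _ ≤ C1 * ‖z‖ ^ n + ‖z‖ ^ n * C2 := by
          gcongr
          · exact (h1 z hz).trans (le_mul_of_one_le_right hC1 e1)
          · exact h2 z hz
      _ ≤ _ := by nlinarith
  · obtain ⟨C2, hC2, h2⟩ := bdd_refl (deriv f) (hf.deriv isOpen_ball).continuousOn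
    refine ⟨C2 + 1, 2, by positivity, by norm_num, fun z hz => ?_⟩
    have hz1 : 1 < ‖z‖ := by linarith
    have e1 : 1 ≤ ‖z‖ ^ (n - 2) := one_le_pow₀ hz1.le
    rw [dbar_ext f F hf hFprim z hz1, norm_div, norm_mul, norm_neg, norm_pow, RCLike.norm_conj,
      div_le_iff₀ (by positivity), norm_sub_refl z hz1]
    have h3 : ‖z‖ - ‖z‖⁻¹ ≤ ‖z‖ ^ 2 := by
      have : 0 ≤ ‖z‖⁻¹ := by positivity
      nlinarith
    calc _ ≤ ‖z‖ ^ 2 * C2 := by gcongr; exact h2 z hz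
      _ ≤ ‖z‖ ^ 2 * ((C2 + 1) * ‖z‖ ^ (n - 2)) := by
        gcongr
        nlinarith
      _ = _ := by ring
  · refine lt_of_le_of_lt ?_ hfM
    refine iSup₂_mono fun a ha => ?_
    exact mul_le_mul' le_rfl (integral_bound f F hf hFprim n hn a (by simpa using ha))

end
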